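/- Let A = (a_ij) be a 2×2 generalized Cartan matrix with a₁₂·a₂₁ ≥ 4 (infinite type), and set ψ = a₁₂ω₁² + a₁₂a₂₁ω₁ω₂ + a₂₁ω₂² ∈ ℚ[ω₁,ω₂]. Then the subalgebra of ℚ[ω₁,ω₂] consisting of polynomials fixed by both σ₁ and σ₂ equals the ℚ-subalgebra generated by ψ. -/

import Mathlib

open MvPolynomial

/-- `A` is a (generalized) Cartan matrix. -/
def IsGCM {n : ℕ} (A : Matrix (Fin n) (Fin n) ℤ) : Prop :=
  (∀ i, A i i = 2) ∧ (∀ i j, i ≠ j → A i j ≤ 0) ∧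
    (∀ i j, i ≠ j → (A i j = 0 ↔ A j i = 0))

/-- The simple root `α_j = a₁ⱼω₁ + a₂ⱼω₂` viewed in `ℚ[ω₁,ω₂]`. -/
noncomputable def cartanAlpha₂ (A : Matrix (Fin 2) (Fin 2) ℤ) (j : Fin 2) :
    MvPolynomial (Fin 2) ℚ :=
  ∑ i : Fin 2, (C ((A i j : ℤ) : ℚ)) * X i

/-- The simple reflection `σ_j` of `ℚ[ω₁,ω₂]`. -/
noncomputable def cartanSigma₂ (A : Matrix (Fin 2) (Fin 2) ℤ) (j : Fin 2) :
    MvPolynomial (Fin 2) ℚ →ₐ[ℚ] MvPolynomial (Fin 2) ℚ :=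
  aeval (fun i => if i = j then X j - cartanAlpha₂ A j else X i)

/-- The Killing form `ψ = a₁₂ω₁² + a₁₂a₂₁ω₁ω₂ + a₂₁ω₂²`. -/
noncomputable def killingForm₂ (A : Matrix (Fin 2) (Fin 2) ℤ) : MvPolynomial (Fin 2) ℚ :=
  C ((A 0 1 : ℤ) : ℚ) * X 0 ^ 2 + C (((A 0 1 * A 1 0 : ℤ)) : ℚ) * X 0 * X 1 +
    C ((A 1 0 : ℤ) : ℚ) * X 1 ^ 2

/-!
A nonzero polynomial has only finitely many divisors up to units. An invariant that vanishes on
the line `ω₂ = 0` is divisible by `ω₂`, hence by the whole orbit of `ω₂` under the rotation `σ₁σ₂`;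
for infinite type this orbit contains infinitely many pairwise non-proportional linear forms, so the
invariant is zero. Thus an invariant is determined by its restriction to `ω₂ = 0`. That restriction
is even, because `σ₁` acts on the line by `ω₁ ↦ -ω₁`, and `ψ` restricts to `a₁₂ω₁²`, so every
possible restriction is already attained by a polynomial in `ψ`.
-/

section OrbitOfDivisors

variable {G M : Type*} [Group G] [CommMonoidWithZero M] [MulDistribMulAction G M] {g : G} {p r : M}

theorem injective_associates_mk_pow_smul (hp : ∀ n : ℕ, n ≠ 0 → ¬ Associated p (g ^ n • p)) :
    Function.Injective fun n : ℕ => Associates.mk (g ^ n • p) := by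
  refine Function.Injective.of_lt_imp_ne fun i j hij h => hp (j - i) (Nat.sub_ne_zero_of_lt hij) ?_
  have h_cancel := (Associates.mk_eq_mk_iff_associated.mp h).map
    (MulDistribMulAction.toMonoidHom M (g ^ i)⁻¹)
  simpa only [MulDistribMulAction.toMonoidHom_apply, smul_smul, inv_mul_cancel, one_smul,
    pow_sub g hij.le, (Commute.pow_pow_self g j i).inv_right.eq] using h_cancel

theorem eq_zero_of_dvd_of_forall_not_associated_pow_smul [UniqueFactorizationMonoid M]
    (hr : g • r = r) (hpr : p ∣ r) (hp : ∀ n : ℕ, n ≠ 0 → ¬ Associated p (g ^ n • p)) : r = 0 := by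
  by_contra hr0
  have h_dvd (n : ℕ) : Associates.mk (g ^ n • p) ∣ Associates.mk r := by
    have h_fixed : g ^ n • r = r := (MulAction.stabilizer G r).pow_mem hr n
    have h := map_dvd (MulDistribMulAction.toMonoidHom M (g ^ n)) hpr
    simp only [MulDistribMulAction.toMonoidHom_apply, h_fixed] at h
    exact Associates.mk_dvd_mk.mpr h
  let _ : Fintype {x // x ∣ Associates.mk r} :=
    UniqueFactorizationMonoid.fintypeSubtypeDvd _ (Associates.mk_ne_zero.mpr hr0)
  exact not_injective_infinite_finite (fun n : ℕ => (⟨_, h_dvd n⟩ : {x // x ∣ Associates.mk r}))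
    fun i j hij => injective_associates_mk_pow_smul hp (congrArg Subtype.val hij)

end OrbitOfDivisors

theorem expand_contract_two_of_comp_neg_X {R : Type*} [CommRing R] [NoZeroDivisors R]
    (h2 : (2 : R) ≠ 0) {f : Polynomial R} (hf : f.comp (-Polynomial.X) = f) :
    Polynomial.expand R 2 (f.contract 2) = f := by
  ext n
  rw [Polynomial.coeff_expand two_pos, Polynomial.coeff_contract two_ne_zero]
  split_ifs with hn
  · rw [Nat.div_mul_cancel hn]
  · have h_odd : Odd n := Nat.not_even_iff_odd.mp (mt even_iff_two_dvd.mp hn)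
    have h_neg : -f.coeff n = f.coeff n := by
      have h := Polynomial.comp_C_mul_X_coeff (p := f) (r := -1) (n := n)
      rw [map_neg, map_one, neg_one_mul, hf, h_odd.neg_one_pow, mul_neg_one] at h
      exact h.symm
    have h_two : 2 * f.coeff n = 0 := by linear_combination -h_neg
    exact ((mul_eq_zero.mp h_two).resolve_left h2).symm

theorem chebyshev_S_eval_pos {R : Type*} [CommRing R] [LinearOrder R] [IsStrictOrderedRing R]
    {t : R} (ht : 2 ≤ t) (n : ℕ) : 0 < (Polynomial.Chebyshev.S R n).eval t := by
  suffices h : 0 < (Polynomial.Chebyshev.S R n).eval t ∧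
      (Polynomial.Chebyshev.S R n).eval t ≤ (Polynomial.Chebyshev.S R (n + 1)).eval t from h.1
  induction n with
  | zero => simpa using one_le_two.trans ht
  | succ n ih =>
    obtain ⟨h_pos, h_le⟩ := ih
    have h_rec : (Polynomial.Chebyshev.S R (n + 1 + 1)).eval t =
        t * (Polynomial.Chebyshev.S R (n + 1)).eval t - (Polynomial.Chebyshev.S R n).eval t := by
      rw [add_assoc, one_add_one_eq_two, Polynomial.Chebyshev.S_add_two]
      simp
    push_cast
    rw [h_rec]
    exact ⟨by linarith, by nlinarith⟩

theorem eq_self_of_mem_adjoin_singleton {R S : Type*} [CommSemiring R] [Semiring S] [Algebra R S]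
    {f : S →ₐ[R] S} {p s : S} (hp : f p = p) (hs : s ∈ Algebra.adjoin R {p}) : f s = s :=
  AlgHom.adjoin_le_equalizer f (AlgHom.id R S) (Set.eqOn_singleton.mpr hp) hs

/-- The reflection of `R[ω₁, ω₂]` that negates the `j`-th simple root, written with the single
off-diagonal Cartan entry `c` it depends on: `ω_j ↦ -ω_j - c ω_i` for the other index `i`, which
in `Fin 2` is `j.rev`. -/
noncomputable def rank2Reflection {R : Type*} [CommRing R] (c : R) (j : Fin 2) :
    MvPolynomial (Fin 2) R →ₐ[R] MvPolynomial (Fin 2) R :=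
  aeval fun i => if i = j then -X j - C c * X j.rev else X i

/-- The Killing form `aω₁² + abω₁ω₂ + bω₂²` of the Cartan matrix with off-diagonal entries
`a = a₁₂` and `b = a₂₁` in an arbitrary commutative ring. -/
noncomputable def rank2KillingForm {R : Type*} [CommRing R] (a b : R) : MvPolynomial (Fin 2) R :=
  C a * X 0 ^ 2 + C (a * b) * X 0 * X 1 + C b * X 1 ^ 2

section Reflections

variable {R : Type*} [CommRing R]

theorem rank2Reflection_X_self (c : R) (j : Fin 2) :
    rank2Reflection c j (X j) = -X j - C c * X j.rev := by
  simp [rank2Reflection]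

theorem rank2Reflection_X_of_ne (c : R) {i j : Fin 2} (hij : i ≠ j) :
    rank2Reflection c j (X i) = X i := by
  simp [rank2Reflection, hij]

theorem rank2Reflection_comp_self (c : R) (j : Fin 2) :
    (rank2Reflection c j).comp (rank2Reflection c j) = AlgHom.id R _ := by
  ext i : 1
  rcases eq_or_ne i j with rfl | hij
  · have h_rev : i.rev ≠ i := by fin_cases i <;> decide
    simp [rank2Reflection_X_self, rank2Reflection_X_of_ne c h_rev]
  · simp [rank2Reflection_X_of_ne c hij]

theorem rank2Reflection_zero_killingForm (a b : R) :
    rank2Reflection b 0 (rank2KillingForm a b) = rank2KillingForm a b := by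
  simp only [rank2KillingForm, map_add, map_mul, map_pow, algHom_C, algebraMap_eq,
    rank2Reflection_X_self, rank2Reflection_X_of_ne b one_ne_zero, Fin.rev_zero, Fin.reduceLast]
  ring

theorem rank2Reflection_one_killingForm (a b : R) :
    rank2Reflection a 1 (rank2KillingForm a b) = rank2KillingForm a b := by
  simp only [rank2KillingForm, map_add, map_mul, map_pow, algHom_C, algebraMap_eq,
    rank2Reflection_X_self, rank2Reflection_X_of_ne a zero_ne_one, Fin.reduceRev]
  ring

/-- The rotation `σ₁σ₂`, which generates the index-two rotation subgroup of the Weyl group, as an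
automorphism of `R[ω₁, ω₂]` (`σ₂` is applied first). -/
noncomputable def rank2Rotation (a b : R) : MvPolynomial (Fin 2) R ≃ₐ[R] MvPolynomial (Fin 2) R :=
  (AlgEquiv.ofAlgHom _ _ (rank2Reflection_comp_self a 1) (rank2Reflection_comp_self a 1)).trans
    (AlgEquiv.ofAlgHom _ _ (rank2Reflection_comp_self b 0) (rank2Reflection_comp_self b 0))

theorem rank2Rotation_apply (a b : R) (q : MvPolynomial (Fin 2) R) :
    rank2Rotation a b q = rank2Reflection b 0 (rank2Reflection a 1 q) :=
  rfl

theorem rank2Rotation_linear (a b u v : R) :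
    rank2Rotation a b (C u * X 0 + C v * X 1) =
      C (a * v - u) * X 0 + C ((a * b - 1) * v - b * u) * X 1 := by
  simp only [rank2Rotation_apply, map_add, map_sub, map_neg, map_mul, map_one, algHom_C,
    algebraMap_eq, rank2Reflection_X_self, rank2Reflection_X_of_ne a zero_ne_one,
    rank2Reflection_X_of_ne b one_ne_zero, Fin.reduceRev, Fin.rev_zero, Fin.reduceLast]
  ring

-- By Cayley–Hamilton the coefficients satisfy `c (n + 2) = (a * b - 2) * c (n + 1) - c n`, the
-- recursion of the rescaled Chebyshev polynomials `S`.
theorem rank2Rotation_pow_X_one (a b : R) (n : ℕ) :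
    (rank2Rotation a b ^ n) (X 1) =
      C (a * (Polynomial.Chebyshev.S R (n - 1)).eval (a * b - 2)) * X 0 +
      C ((Polynomial.Chebyshev.S R n).eval (a * b - 2) +
        (Polynomial.Chebyshev.S R (n - 1)).eval (a * b - 2)) * X 1 := by
  induction n with
  | zero => simp
  | succ n ih =>
    have h_rec : (Polynomial.Chebyshev.S R (n + 1)).eval (a * b - 2) =
        (a * b - 2) * (Polynomial.Chebyshev.S R n).eval (a * b - 2) -
          (Polynomial.Chebyshev.S R (n - 1)).eval (a * b - 2) := by
      simp [Polynomial.Chebyshev.S_add_one]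
    rw [pow_succ', AlgEquiv.mul_apply, ih, rank2Rotation_linear]
    push_cast
    rw [add_sub_cancel_right, h_rec]
    congr 3 <;> ring

theorem not_associated_X_one_rank2Rotation_pow [NoZeroDivisors R] {a b : R} (ha : a ≠ 0)
    (hS : ∀ n : ℕ, (Polynomial.Chebyshev.S R n).eval (a * b - 2) ≠ 0) {n : ℕ} (hn : n ≠ 0) :
    ¬ Associated (X 1) ((rank2Rotation a b ^ n) (X 1)) := by
  obtain ⟨m, rfl⟩ := Nat.exists_eq_succ_of_ne_zero hn
  intro h
  have h_dvd : eval ![1, 0] (X 1) ∣ eval ![1, 0] ((rank2Rotation a b ^ (m + 1)) (X 1)) :=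
    map_dvd _ h.dvd
  rw [rank2Rotation_pow_X_one] at h_dvd
  simp [ha, hS m] at h_dvd

end Reflections

section RestrictToLine

variable {R : Type*} [CommRing R]

/-- Restriction of a polynomial in `ω₁, ω₂` to the line `ω₂ = 0`. -/
noncomputable def restrictToLine : MvPolynomial (Fin 2) R →ₐ[R] Polynomial R :=
  aeval ![Polynomial.X, 0]

theorem X_one_dvd_of_restrictToLine_eq_zero {q : MvPolynomial (Fin 2) R}
    (hq : restrictToLine q = 0) : X 1 ∣ q := by
  let I : Ideal (MvPolynomial (Fin 2) R) := Ideal.span {X 1}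
  have h_mk : (Ideal.Quotient.mkₐ R I).comp ((Polynomial.aeval (X 0)).comp restrictToLine) =
      Ideal.Quotient.mkₐ R I := by
    ext i
    fin_cases i
    · simp [restrictToLine]
    · have h : Ideal.Quotient.mk I (X 1) = 0 :=
        Ideal.Quotient.eq_zero_iff_mem.mpr (Ideal.mem_span_singleton_self _)
      simp [restrictToLine, h]
  have h_zero := DFunLike.congr_fun h_mk q
  simp only [AlgHom.comp_apply, hq, map_zero] at h_zero
  exact Ideal.mem_span_singleton.mp (Ideal.Quotient.eq_zero_iff_mem.mp h_zero.symm)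

theorem restrictToLine_rank2Reflection_zero (b : R) (q : MvPolynomial (Fin 2) R) :
    restrictToLine (rank2Reflection b 0 q) = (restrictToLine q).comp (-Polynomial.X) := by
  have h : restrictToLine.comp (rank2Reflection b 0) =
      (Polynomial.aeval (-Polynomial.X)).comp restrictToLine := by
    ext i : 1
    fin_cases i <;> simp [restrictToLine, rank2Reflection]
  rw [Polynomial.comp_eq_aeval]
  exact DFunLike.congr_fun h q

theorem restrictToLine_rank2KillingForm (a b : R) :
    restrictToLine (rank2KillingForm a b) = Polynomial.C a * Polynomial.X ^ 2 := by
  simp [restrictToLine, rank2KillingForm]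

theorem eq_zero_of_restrictToLine_eq_zero [IsDomain R] [UniqueFactorizationMonoid R] {a b : R}
    (ha : a ≠ 0) (hS : ∀ n : ℕ, (Polynomial.Chebyshev.S R n).eval (a * b - 2) ≠ 0)
    {r : MvPolynomial (Fin 2) R} (hr_rot : rank2Rotation a b r = r) (hr : restrictToLine r = 0) :
    r = 0 :=
  eq_zero_of_dvd_of_forall_not_associated_pow_smul (g := rank2Rotation a b) hr_rot
    (X_one_dvd_of_restrictToLine_eq_zero hr)
    fun _ hn => not_associated_X_one_rank2Rotation_pow ha hS hn

end RestrictToLine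

section Invariants

variable {K : Type*} [Field K] {a b : K}

theorem exists_mem_adjoin_restrictToLine_eq (h2 : (2 : K) ≠ 0) (ha : a ≠ 0)
    {q : MvPolynomial (Fin 2) K} (hq : rank2Reflection b 0 q = q) :
    ∃ s ∈ Algebra.adjoin K {rank2KillingForm a b}, restrictToLine s = restrictToLine q := by
  let f := restrictToLine q
  have h_even : f.comp (-Polynomial.X) = f := by
    rw [← restrictToLine_rank2Reflection_zero b, hq]
  have h_form : restrictToLine (a⁻¹ • rank2KillingForm a b) = Polynomial.X ^ 2 := by
    rw [map_smul, restrictToLine_rank2KillingForm, ← Polynomial.smul_eq_C_mul,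
      inv_smul_smul₀ ha]
  have h_mem : a⁻¹ • rank2KillingForm a b ∈ Algebra.adjoin K {rank2KillingForm a b} :=
    Subalgebra.smul_mem _ (Algebra.self_mem_adjoin_singleton K _) _
  refine ⟨Polynomial.aeval (a⁻¹ • rank2KillingForm a b) (f.contract 2),
    Algebra.adjoin_le (Set.singleton_subset_iff.mpr h_mem)
      (Polynomial.aeval_mem_adjoin_singleton K _), ?_⟩
  rw [← Polynomial.aeval_algHom_apply, h_form]
  exact expand_contract_two_of_comp_neg_X h2 h_even

/-- Since `σ₁σ₂` has determinant `1` and trace `a * b - 2`, its powers are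
`(σ₁σ₂) ^ (n + 1) = S_n (a * b - 2) • σ₁σ₂ - S_{n-1} (a * b - 2)` on linear forms, so `hS` says
that no positive power of it is a scalar. -/
theorem rank2_invariants_eq_adjoin_killing_general (h2 : (2 : K) ≠ 0) (ha : a ≠ 0)
    (hS : ∀ n : ℕ, (Polynomial.Chebyshev.S K n).eval (a * b - 2) ≠ 0) :
    {q : MvPolynomial (Fin 2) K | rank2Reflection b 0 q = q ∧ rank2Reflection a 1 q = q} =
      ↑(Algebra.adjoin K {rank2KillingForm a b}) := by
  have h_adjoin₀ {s} := eq_self_of_mem_adjoin_singleton (s := s)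
    (rank2Reflection_zero_killingForm a b)
  have h_adjoin₁ {s} := eq_self_of_mem_adjoin_singleton (s := s)
    (rank2Reflection_one_killingForm a b)
  refine Set.Subset.antisymm ?_ fun s hs => ⟨h_adjoin₀ hs, h_adjoin₁ hs⟩
  rintro q ⟨hq₀, hq₁⟩
  obtain ⟨s, hs, hsq⟩ := exists_mem_adjoin_restrictToLine_eq h2 ha hq₀
  have h_rot : rank2Rotation a b (q - s) = q - s := by
    simp only [rank2Rotation_apply, map_sub, hq₀, hq₁, h_adjoin₀ hs, h_adjoin₁ hs]
  have h_sub : q - s = 0 :=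
    eq_zero_of_restrictToLine_eq_zero ha hS h_rot (by rw [map_sub, hsq, sub_self])
  rwa [sub_eq_zero.mp h_sub]

end Invariants

theorem cartanSigma₂_eq_rank2Reflection {A : Matrix (Fin 2) (Fin 2) ℤ} {j : Fin 2}
    (hj : A j j = 2) : cartanSigma₂ A j = rank2Reflection (A j.rev j : ℚ) j := by
  ext i : 1
  fin_cases j <;> fin_cases i <;>
    simp_all [cartanSigma₂, cartanAlpha₂, rank2Reflection] <;> ring

theorem killingForm₂_eq_rank2KillingForm (A : Matrix (Fin 2) (Fin 2) ℤ) :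
    killingForm₂ A = rank2KillingForm (A 0 1 : ℚ) (A 1 0 : ℚ) := by
  simp only [killingForm₂, rank2KillingForm, Int.cast_mul]

/-- For a 2×2 generalized Cartan matrix of infinite type (`a₁₂ a₂₁ ≥ 4`), the
subalgebra of `ℚ[ω₁,ω₂]` of polynomials fixed by both `σ₁` and `σ₂` is the
`ℚ`-subalgebra generated by the Killing form `ψ`. -/
theorem rank2_invariants_eq_adjoin_killing (A : Matrix (Fin 2) (Fin 2) ℤ)
    (hA : IsGCM A) (hinf : 4 ≤ A 0 1 * A 1 0) :
    {q : MvPolynomial (Fin 2) ℚ |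
        cartanSigma₂ A 0 q = q ∧ cartanSigma₂ A 1 q = q} =
      ↑(Algebra.adjoin ℚ {killingForm₂ A}) := by
  have h01 : (A 0 1 : ℚ) ≠ 0 :=
    Int.cast_ne_zero.mpr (left_ne_zero_of_mul (four_pos.trans_le hinf).ne')
  have h_trace : (2 : ℚ) ≤ A 0 1 * A 1 0 - 2 := by exact_mod_cast (by lia : 2 ≤ A 0 1 * A 1 0 - 2)
  rw [cartanSigma₂_eq_rank2Reflection (hA.1 0), cartanSigma₂_eq_rank2Reflection (hA.1 1),
    killingForm₂_eq_rank2KillingForm]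
  exact rank2_invariants_eq_adjoin_killing_general two_ne_zero h01
    fun n => (chebyshev_S_eval_pos h_trace n).ne'
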